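/- For every integer k with 0 ≤ k ≤ c_m·N, one has the identity of functions on G: σ_k * σ_N = Σ_{d=0}^{k} b_k(d) · σ_{N−d}, where b_k(d) = m^{−k} · C(k,d) · (m−1)^{k−d}; these coefficients b_k(d) are exactly the probability masses of a sum of k i.i.d. random variables each equal to 1 with probability 1/m and 0 with probability (m−1)/m. -/

import Mathlib

open Finset

noncomputable section

/-- Hamming weight on `(ℤ/(m+1)ℤ)^N`. -/
def hw {m N : ℕ} (y : Fin N → ZMod (m + 1)) : ℕ :=
  (Finset.univ.filter fun i => y i ≠ 0).card

/-- `L¹`-normalized indicator of the sphere of radius `r` (zero if `r < 0` or `r > N`). -/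
def sigmaC (m N : ℕ) (r : ℤ) : (Fin N → ZMod (m + 1)) → ℂ := fun x =>
  if (hw x : ℤ) = r then
    ((Finset.univ.filter fun y : Fin N → ZMod (m + 1) => (hw y : ℤ) = r).card : ℂ)⁻¹
  else 0

/-- Convolution on `(ℤ/(m+1)ℤ)^N`. -/
def convC {m N : ℕ} (g f : (Fin N → ZMod (m + 1)) → ℂ) : (Fin N → ZMod (m + 1)) → ℂ :=
  fun x => ∑ y, g y * f (x - y)

/-- `b_k(d) = m^{-k} C(k,d) (m-1)^{k-d}`: the probability that a sum of `k` i.i.d. random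
variables, each `1` with probability `1/m` and `0` with probability `(m-1)/m`, equals `d`. -/
def bCoeff (m k d : ℕ) : ℝ :=
  ((m : ℝ)⁻¹) ^ k * (k.choose d : ℝ) * ((m : ℝ) - 1) ^ (k - d)

open Polynomial in
lemma count_gen {m N : ℕ} (S : Fin N → Finset (ZMod (m + 1))) (r : ℕ) :
    ((Finset.univ.filter fun y : Fin N → ZMod (m + 1) => (∀ i, y i ∈ S i) ∧ hw y = r).card : ℂ)
      = (∏ i, ∑ a ∈ S i, (if a = 0 then (1 : ℂ[X]) else X)).coeff r := by
  rw [Finset.prod_univ_sum, Polynomial.finset_sum_coeff]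
  have h : ∀ y : Fin N → ZMod (m + 1),
      (∏ i, (if y i = 0 then (1 : ℂ[X]) else X)) = X ^ (hw y) := by
    intro y
    rw [hw, Finset.prod_ite]
    simp
  simp only [h, Polynomial.coeff_X_pow]
  rw [Finset.sum_ite, Finset.sum_const_zero, add_zero, Finset.sum_const, nsmul_eq_mul, mul_one]
  congr 2
  ext y
  simp [Fintype.mem_piFinset, eq_comm]

open Polynomial in
lemma coeff_lin (c : ℂ) (n k : ℕ) : ((1 + C c * X : ℂ[X]) ^ n).coeff k = n.choose k * c ^ k := by
  have : (1 + C c * X : ℂ[X]) ^ n = ((1 + X) ^ n : ℂ[X]).comp (C c * X) := by simp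
  rw [this, Polynomial.comp_C_mul_X_coeff, Polynomial.coeff_one_add_X_pow]

open Polynomial in
lemma sphere_card (m N r : ℕ) :
    ((Finset.univ.filter fun y : Fin N → ZMod (m + 1) => hw y = r).card : ℂ)
      = N.choose r * (m : ℂ) ^ r := by
  have h := count_gen (m := m) (N := N) (fun _ => Finset.univ) r
  simp only [Finset.mem_univ, implies_true, true_and] at h
  rw [h]
  have : (∑ a : ZMod (m + 1), (if a = 0 then (1 : ℂ[X]) else X)) = 1 + C (m : ℂ) * X := by
    rw [← Finset.add_sum_erase _ _ (Finset.mem_univ 0), if_pos rfl,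
      Finset.sum_congr rfl (g := fun _ => X)]
    · simp [ZMod.card]
    · intro a ha
      rw [if_neg (Finset.ne_of_mem_erase ha)]
  rw [this, Finset.prod_const, Finset.card_univ, Fintype.card_fin, coeff_lin]

open Polynomial in
lemma avoid_card (m N k : ℕ) (hm : 2 ≤ m) (x : Fin N → ZMod (m + 1)) (e : ℕ) (he : hw x + e = N) :
    ((Finset.univ.filter fun y : Fin N → ZMod (m + 1) => (∀ i, y i ≠ x i) ∧ hw y = k).card : ℂ)
      = if e ≤ k then (m : ℂ) ^ e * ((hw x).choose (k - e) * ((m : ℂ) - 1) ^ (k - e)) else 0 := by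
  have h := count_gen (m := m) (N := N) (fun i => Finset.univ.erase (x i)) k
  simp only [Finset.mem_univ, and_true, Finset.mem_erase] at h
  rw [h]
  have h0 : ∀ b : ZMod (m + 1), (∑ a ∈ Finset.univ.erase b, (if a = 0 then (1 : ℂ[X]) else X))
      = if b ≠ 0 then 1 + C ((m : ℂ) - 1) * X else C (m : ℂ) * X := by
    intro b
    split_ifs with hb
    · have h1 : (0 : ZMod (m + 1)) ∈ Finset.univ.erase b := by simp [Ne.symm hb]
      rw [← Finset.add_sum_erase _ _ h1, if_pos rfl,
        Finset.sum_congr rfl (g := fun _ => X)]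
      · rw [Finset.sum_const, Finset.card_erase_of_mem h1, Finset.card_erase_of_mem (Finset.mem_univ _),
          Finset.card_univ, ZMod.card, Nat.add_sub_cancel, nsmul_eq_mul, Nat.cast_sub (by omega)]
        simp
      · intro a ha
        rw [if_neg (Finset.ne_of_mem_erase ha)]
    · have hb : b = 0 := by simpa using hb
      subst hb
      rw [Finset.sum_congr rfl (g := fun _ => X)]
      · simp [ZMod.card]
      · intro a ha
        rw [if_neg (Finset.ne_of_mem_erase ha)]
  simp only [h0]
  rw [Finset.prod_ite, Finset.prod_const, Finset.prod_const]
  have h2 : (Finset.univ.filter fun i => ¬ (x i ≠ 0)).card = e := by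
    have := Finset.card_filter_add_card_filter_not (s := (Finset.univ : Finset (Fin N))) (fun i => x i ≠ 0)
    rw [Finset.card_univ, Fintype.card_fin] at this
    unfold hw at he
    omega
  rw [h2, show (Finset.univ.filter fun i => x i ≠ 0).card = hw x from rfl, mul_pow, ← C_pow,
    mul_left_comm, coeff_C_mul, mul_comm (_ ^ hw x), coeff_X_pow_mul', coeff_lin]
  split_ifs <;> simp

lemma hw_le {m N : ℕ} (x : Fin N → ZMod (m + 1)) : hw x ≤ N := by
  unfold hw
  exact (Finset.card_le_univ _).trans (by simp)

lemma hw_eq_N {m N : ℕ} (x : Fin N → ZMod (m + 1)) : hw x = N ↔ ∀ i, x i ≠ 0 := by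
  unfold hw
  have := Finset.card_filter_eq_iff (s := (Finset.univ : Finset (Fin N))) (p := fun i => x i ≠ 0)
  simpa using this

lemma sigmaC_nat (m N r : ℕ) (x : Fin N → ZMod (m + 1)) :
    sigmaC m N (r : ℤ) x = if hw x = r then (N.choose r * (m : ℂ) ^ r)⁻¹ else 0 := by
  unfold sigmaC
  simp only [Nat.cast_inj, sphere_card]

theorem statement13 (m N : ℕ) (hm : 2 ≤ m) (hN : 1 ≤ N) (k : ℕ)
    (hk : (k : ℝ) ≤ (m : ℝ) / (m + 1) * N) :
    ∀ x, convC (sigmaC m N (k : ℤ)) (sigmaC m N (N : ℤ)) x =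
      ∑ d ∈ Finset.range (k + 1), (bCoeff m k d : ℂ) * sigmaC m N ((N : ℤ) - d) x := by
  intro x
  have hkN : k ≤ N := by
    have h1 : (m : ℝ) / (m + 1) ≤ 1 := by
      rw [div_le_one (by positivity)]; linarith
    have h2 : (k : ℝ) ≤ N := hk.trans (mul_le_of_le_one_left (by positivity) h1)
    exact_mod_cast h2
  obtain ⟨e, he⟩ := Nat.exists_eq_add_of_le (hw_le x)
  have hm0 : (m : ℂ) ≠ 0 := by
    have : m ≠ 0 := by omega
    exact_mod_cast this
  have hL : convC (sigmaC m N (k : ℤ)) (sigmaC m N (N : ℤ)) x =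
      ((Finset.univ.filter fun y : Fin N → ZMod (m + 1) => (∀ i, y i ≠ x i) ∧ hw y = k).card : ℂ)
        * ((N.choose k * (m : ℂ) ^ k)⁻¹ * (N.choose N * (m : ℂ) ^ N)⁻¹) := by
    unfold convC
    rw [← nsmul_eq_mul, ← Finset.sum_const, Finset.sum_filter]
    refine Finset.sum_congr rfl fun y _ => ?_
    rw [sigmaC_nat, sigmaC_nat]
    have : hw (x - y) = N ↔ ∀ i, y i ≠ x i := by
      rw [hw_eq_N]
      refine forall_congr' fun i => ?_
      rw [Pi.sub_apply, sub_ne_zero, ne_comm]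
    simp only [this]
    by_cases h1 : hw y = k <;> by_cases h2 : ∀ i, y i ≠ x i <;> simp [h1, h2]
  rw [hL, avoid_card m N k hm x e he.symm]
  have hR : ∀ d ∈ Finset.range (k + 1), (bCoeff m k d : ℂ) * sigmaC m N ((N : ℤ) - d) x =
      if d = e then (bCoeff m k e : ℂ) * (N.choose (hw x) * (m : ℂ) ^ (hw x))⁻¹ else 0 := by
    intro d hd
    rw [Finset.mem_range] at hd
    rw [← Nat.cast_sub (by omega), sigmaC_nat]
    by_cases h : d = e
    · have h3 : hw x = N - d := by omega
      rw [if_pos h3, if_pos h, ← h3, h]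
    · have h3 : ¬ hw x = N - d := by omega
      rw [if_neg h3, if_neg h, mul_zero]
  rw [Finset.sum_congr rfl hR, Finset.sum_ite_eq']
  by_cases hek : e ≤ k
  · rw [if_pos hek, if_pos (Finset.mem_range.2 (by omega))]
    have hc := Nat.choose_mul (n := N) (k := k) (s := e) hek
    have hs : N.choose e = N.choose (hw x) := by
      rw [← Nat.choose_symm (hw_le x)]; congr 1; omega
    rw [hs, show N - e = hw x by omega] at hc
    have hc' : (N.choose k : ℂ) * k.choose e = N.choose (hw x) * (hw x).choose (k - e) := by
      exact_mod_cast hc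
    have hA : (N.choose k : ℂ) ≠ 0 := by
      exact_mod_cast (Nat.choose_pos hkN).ne'
    have hB : (N.choose (hw x) : ℂ) ≠ 0 := by
      exact_mod_cast (Nat.choose_pos (hw_le x)).ne'
    have hpow : (m : ℂ) ^ N = (m : ℂ) ^ hw x * (m : ℂ) ^ e := by rw [← pow_add, ← he]
    rw [hpow, Nat.choose_self]
    unfold bCoeff
    push_cast
    generalize hw x = w at *
    rw [inv_pow]
    generalize ((m : ℂ) - 1) ^ (k - e) = q
    have p1 := pow_ne_zero k hm0
    have p2 := pow_ne_zero e hm0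
    have p3 := pow_ne_zero w hm0
    generalize (m : ℂ) ^ k = u at *
    generalize (m : ℂ) ^ e = v at *
    generalize (m : ℂ) ^ w = z at *
    field_simp
    linear_combination (-q) * hc'
  · rw [if_neg hek, if_neg (by simpa using hek), zero_mul]
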